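/- Let D ≥ 2, L ≥ 1 be integers, K = L^D, and for each N ≥ 1 let ρ_N be the pushforward of the product Haar measure on U(N) gauge configurations under the normalized Wilson action t. Then for every fixed odd l ≥ 1, the l-th moment of ρ_N is O(1/N^{l+1}) as N → ∞; in particular N^l ∫ t^l dρ_N(t) → 0 as N → ∞. -/

import Mathlib

open MeasureTheory Matrix Finset Filter
open scoped Nat

noncomputable section

/-- Borel measurable structure on the unitary group `U(N)`. -/
instance (N : ℕ) : MeasurableSpace (Matrix.unitaryGroup (Fin N) ℂ) := borel _

instance (N : ℕ) : BorelSpace (Matrix.unitaryGroup (Fin N) ℂ) := ⟨rfl⟩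

/-- Sites of the `D`-dimensional periodic lattice of side `L`: the discrete torus `(ℤ/Lℤ)^D`. -/
abbrev Site (D L : ℕ) := Fin D → ZMod L

/-- Edges: a site together with a positive coordinate direction. -/
abbrev Edge (D L : ℕ) := Site D L × Fin D

/-- Lattice gauge configurations: a unitary matrix `U_{x,μ} ∈ U(N)` on every edge. -/
abbrev Conf (D L N : ℕ) := Edge D L → Matrix.unitaryGroup (Fin N) ℂ

/-- The site displaced one step from `x` in direction `μ`. -/
def shift {D L : ℕ} (x : Site D L) (μ : Fin D) : Site D L :=
  Function.update x μ (x μ + 1)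

/-- The normalized Wilson action
`t(U) = (1/K) Σ_x Σ_{μ<ν} (1/N) Re Tr (U_{x,ν}† U_{x+ν,μ}† U_{x+μ,ν} U_{x,μ})`, with `K = L^D`. -/
def wilsonAction (D L N : ℕ) [NeZero L] (U : Conf D L N) : ℝ :=
  ((L : ℝ) ^ D)⁻¹ *
    ∑ x : Site D L, ∑ p ∈ Finset.univ.filter (fun p : Fin D × Fin D => p.1 < p.2),
      (N : ℝ)⁻¹ *
        (Matrix.trace ((U (x, p.2) : Matrix (Fin N) (Fin N) ℂ)ᴴ
          * (U (shift x p.2, p.1) : Matrix (Fin N) (Fin N) ℂ)ᴴ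
          * (U (shift x p.1, p.2) : Matrix (Fin N) (Fin N) ℂ)
          * (U (x, p.1) : Matrix (Fin N) (Fin N) ℂ))).re

/-- The product over all edges of the measure `haarU` on `U(N)`. -/
def confMeasure (D L N : ℕ) [NeZero L]
    (haarU : Measure (Matrix.unitaryGroup (Fin N) ℂ)) : Measure (Conf D L N) :=
  Measure.pi fun _ => haarU

/-!
Translating one edge variable along a one-parameter subgroup leaves the Haar measure invariant, and
differentiating expected products of traces of loops along it gives the Schwinger–Dyson equation:
the signed sum of the splittings of a loop `g` at an edge `e` and of its mergings at `e` with the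
other loops has expectation zero. When `g` is cyclically reduced and begins with `e`, exactly one
splitting has a trivial part; it contributes `N` times the original moment, and every other term is
a family of no larger total length, except that a trivial merging contributes `N` times the moment
of a family with two loops fewer. For bounded total length and large `N`, absorbing the supremum of
the moments into the left-hand side therefore bounds them uniformly in `N`.

If the number of loops is odd, then so is the number left by a trivial merging, and no term ever
reaches the empty family. By induction all terms other than the trivial splitting are bounded, so
the moment itself is `O(1/N)`. Finally `t` is `(2KN)⁻¹` times the sum of the traces of the
oriented plaquettes, so its `l`-th moment is `N⁻ˡ` times a bounded combination of moments of
families of `l` loops.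
-/

section Generalities

lemma norm_le_card_mul_of_sum_add_sum_eq_zero {ι κ E : Type*} [Fintype ι] [Fintype κ]
    [SeminormedAddCommGroup E] {a : ι → E} {b : κ → E} (h : ∑ i, a i + ∑ j, b j = 0)
    {K : ℝ} (hK : 0 ≤ K) (i₀ : ι) (ha : ∀ i ≠ i₀, ‖a i‖ ≤ K) (hb : ∀ j, ‖b j‖ ≤ K) :
    ‖a i₀‖ ≤ (Fintype.card ι + Fintype.card κ : ℝ) * K := by
  classical
  have hi₀ : a i₀ = -(∑ i ∈ univ.erase i₀, a i + ∑ j, b j) := by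
    rw [← add_sum_erase _ _ (mem_univ i₀), add_assoc] at h
    exact eq_neg_of_add_eq_zero_left h
  calc ‖a i₀‖ ≤ ‖∑ i ∈ univ.erase i₀, a i‖ + ‖∑ j, b j‖ := by
        rw [hi₀, norm_neg]; exact norm_add_le _ _
    _ ≤ ∑ _i ∈ univ.erase i₀, K + ∑ _j : κ, K :=
        add_le_add (norm_sum_le_of_le _ fun i hi => ha i (ne_of_mem_erase hi))
          (norm_sum_le_of_le _ fun j _ => hb j)
    _ ≤ ∑ _i : ι, K + ∑ _j : κ, K :=
        add_le_add_left (sum_le_sum_of_subset_of_nonneg (erase_subset _ _) fun _ _ _ => hK) _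
    _ = (Fintype.card ι + Fintype.card κ : ℝ) * K := by simp [add_mul]

lemma le_two_mul_of_bddAbove_of_forall_le_half_add {ι : Type*} {s : Set ι} {f : ι → ℝ} {c : ℝ}
    (hbdd : BddAbove (f '' s))
    (hself : ∀ B, (∀ i ∈ s, f i ≤ B) → ∀ i ∈ s, f i ≤ B / 2 + c) {i : ι} (hi : i ∈ s) :
    f i ≤ 2 * c := by
  have hle : ∀ i ∈ s, f i ≤ sSup (f '' s) := fun i hi => le_csSup hbdd ⟨i, hi, rfl⟩
  have hsup : sSup (f '' s) ≤ sSup (f '' s) / 2 + c :=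
    csSup_le ⟨f i, i, hi, rfl⟩ (Set.forall_mem_image.mpr (hself _ hle))
  linarith [hle i hi]

lemma tendsto_pow_mul_of_abs_le_div_pow_succ {a : ℕ → ℝ} {l N₀ : ℕ} {C : ℝ}
    (h : ∀ N ≥ N₀, |a N| ≤ C / (N : ℝ) ^ (l + 1)) :
    Tendsto (fun N : ℕ => (N : ℝ) ^ l * a N) atTop (nhds 0) := by
  refine squeeze_zero_norm' ?_ (tendsto_const_div_atTop_nhds_zero_nat C)
  filter_upwards [eventually_ge_atTop N₀, eventually_gt_atTop 0] with N hN hN0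
  calc ‖(N : ℝ) ^ l * a N‖ = (N : ℝ) ^ l * |a N| := by simp
    _ ≤ (N : ℝ) ^ l * (C / (N : ℝ) ^ (l + 1)) := by gcongr; exact h N hN
    _ = C / N := by rw [pow_succ]; field_simp

lemma hasDerivAt_list_prod {ι A : Type*} [NormedRing A] [NormedAlgebra ℝ A] {f : ι → ℝ → A}
    {f' : ι → A} {l : List ι} {t : ℝ} (h : ∀ i ∈ l, HasDerivAt (f i) (f' i) t) :
    HasDerivAt (fun t => (l.map (f · t)).prod)
      (∑ k : Fin l.length, ((l.take k).map (f · t)).prod * f' l[k] *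
        ((l.drop (k + 1)).map (f · t)).prod) t := by
  refine (HasFDerivAt.list_prod' fun i hi => (h i hi).hasFDerivAt).hasDerivAt.congr_deriv ?_
  simp [mul_assoc]

lemma integral_linearMap_eq_zero_of_selfAdjoint {Ω A : Type*} [MeasurableSpace Ω]
    {μ : Measure Ω} [AddCommGroup A] [Module ℂ A] [StarAddMonoid A] [StarModule ℂ A]
    {F : Ω → A →ₗ[ℂ] ℂ} (hint : ∀ a, Integrable (fun ω => F ω a) μ)
    (hself : ∀ a : selfAdjoint A, ∫ ω, F ω (a : A) ∂μ = 0) (a : A) : ∫ ω, F ω a ∂μ = 0 := by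
  rw [← realPart_add_I_smul_imaginaryPart a]
  simp only [map_add, map_smul, smul_eq_mul]
  rw [integral_add (hint _) ((hint _).const_mul _), integral_const_mul, hself, hself]
  simp

lemma integral_deriv_mul_left_eq_zero {G : Type*} [Group G] [TopologicalSpace G]
    [SeparatelyContinuousMul G] [CompactSpace G] [MeasurableSpace G] [OpensMeasurableSpace G]
    [MeasurableMul G]
    (μ : Measure G) [IsFiniteMeasure μ] [μ.IsMulLeftInvariant] (γ : ℝ → G) {f f' : G → ℂ}
    (hf : Continuous f) (hf' : Continuous f')
    (hderiv : ∀ g t, HasDerivAt (fun t => f (γ t * g)) (f' (γ t * g)) t) :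
    ∫ g, f' g ∂μ = 0 := by
  obtain ⟨C, hC⟩ := isCompact_univ.exists_bound_of_continuousOn hf'.continuousOn
  have hint {h : G → ℂ} (hh : Continuous h) (g₀ : G) : Integrable (fun g => h (g₀ * g)) μ :=
    (hh.comp (continuous_const_mul g₀)).integrable_of_hasCompactSupport (.of_compactSpace _)
  have hderiv_integral : HasDerivAt (fun t => ∫ g, f (γ t * g) ∂μ) (∫ g, f' (γ 0 * g) ∂μ) 0 :=
    (hasDerivAt_integral_of_dominated_loc_of_deriv_le (bound := fun _ => C) univ_mem
      (.of_forall fun t => (hint hf (γ t)).aestronglyMeasurable) (hint hf (γ 0))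
      (hint hf' (γ 0)).aestronglyMeasurable (.of_forall fun g t _ => hC _ (Set.mem_univ _))
      (integrable_const C) (.of_forall fun g t _ => hderiv g t)).2
  simp only [integral_mul_left_eq_self] at hderiv_integral
  exact hderiv_integral.unique (hasDerivAt_const _ _)

lemma continuous_freeGroup_lift {α G : Type*} [Group G] [TopologicalSpace G]
    [IsTopologicalGroup G] (g : FreeGroup α) : Continuous fun V : α → G => FreeGroup.lift V g := by
  induction g using FreeGroup.induction_on with
  | C1 => simpa using continuous_const
  | of a => simpa using continuous_apply a
  | inv_of a _ => simp only [map_inv, FreeGroup.lift_apply_of]; exact (continuous_apply a).inv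
  | mul g h hg hh => simp only [map_mul]; exact hg.mul hh

end Generalities

section UnitaryGroup

variable {n 𝕜 : Type*} [Fintype n] [DecidableEq n] [RCLike 𝕜]

instance : SecondCountableTopology (unitaryGroup n 𝕜) :=
  haveI : SecondCountableTopology (Matrix n n 𝕜) :=
    inferInstanceAs (SecondCountableTopology (n → n → 𝕜))
  TopologicalSpace.Subtype.secondCountableTopology _

instance : CompactSpace (unitaryGroup n 𝕜) := by
  suffices h : IsCompact (unitaryGroup n 𝕜 : Set (Matrix n n 𝕜)) from
    isCompact_iff_compactSpace.mp h
  have hbox : IsCompact (Set.univ.pi fun _ : n => Set.univ.pi fun _ : n =>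
      Metric.closedBall (0 : 𝕜) 1) :=
    isCompact_univ_pi fun _ => isCompact_univ_pi fun _ => isCompact_closedBall _ _
  refine hbox.of_isClosed_subset ?_ fun U hU i _ j _ => by
    simpa using entry_norm_bound_of_unitary hU i j
  have heq : (unitaryGroup n 𝕜 : Set (Matrix n n 𝕜)) = {U | star U * U = 1} := by
    ext U; exact mem_unitaryGroup_iff'
  rw [heq]
  exact isClosed_eq (by fun_prop) continuous_const

lemma norm_trace_unitary_le (U : unitaryGroup n 𝕜) :
    ‖(U : Matrix n n 𝕜).trace‖ ≤ Fintype.card n :=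
  (norm_sum_le_of_le _ fun i _ => entry_norm_bound_of_unitary U.2 i i).trans_eq (by simp)

end UnitaryGroup

section Cuts

variable {α : Type*}

lemma isCyclicallyReduced_append_singleton {x : α × Bool} {w : List (α × Bool)}
    (h : FreeGroup.IsCyclicallyReduced (x :: w)) :
    FreeGroup.IsCyclicallyReduced (w ++ [x]) := by
  cases w with
  | nil => exact h
  | cons y w =>
    have hxy := (List.isChain_cons_cons.mp h.isReduced).1
    refine FreeGroup.isCyclicallyReduced_cons_append_iff.mpr ⟨?_, hxy⟩
    refine List.isChain_append.mpr ⟨h.isReduced.tail, List.isChain_singleton x, ?_⟩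
    simpa using h.2

/-- The position at which the letter `x`, standing in position `k` of a word, cuts that word.
A left translation by `u` turns `e` into `u * e` but `e⁻¹` into `e⁻¹ * u⁻¹`, so positive letters
cut on their left and inverse letters on their right. -/
def cutIndex (x : α × Bool) (k : ℕ) : ℕ := cond x.2 k (k + 1)

variable [DecidableEq α]

/-- The exponent `±1` of the letter `x` if it is a power of the variable `e`, and `0` otherwise. -/
def letterSign (e : α) (x : α × Bool) : ℂ :=
  if x.1 = e then cond x.2 1 (-1) else 0

lemma norm_letterSign_le (e : α) (x : α × Bool) : ‖letterSign e x‖ ≤ 1 := by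
  rcases x with ⟨x, _ | _⟩ <;> unfold letterSign <;> split <;> simp

lemma norm_letterSign_mul_le (e : α) (x : α × Bool) {z : ℂ} {K : ℝ} (hz : ‖z‖ ≤ K) :
    ‖letterSign e x * z‖ ≤ K := by
  rw [norm_mul]
  exact (mul_le_of_le_one_left (norm_nonneg z) (norm_letterSign_le e x)).trans hz

lemma norm_letterSign_self (x : α × Bool) : ‖letterSign x.1 x‖ = 1 := by
  rcases x with ⟨x, _ | _⟩ <;> simp [letterSign]

/-- The part of the reduced word of `g` that precedes the cut at its letter number `k`. -/
def cutLeft (g : FreeGroup α) (k : Fin g.toWord.length) : FreeGroup α :=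
  FreeGroup.mk (g.toWord.take (cutIndex g.toWord[k] k))

/-- The part of the reduced word of `g` that follows the cut at its letter number `k`. -/
def cutRight (g : FreeGroup α) (k : Fin g.toWord.length) : FreeGroup α :=
  FreeGroup.mk (g.toWord.drop (cutIndex g.toWord[k] k))

lemma cutLeft_mul_cutRight (g : FreeGroup α) (k : Fin g.toWord.length) :
    cutLeft g k * cutRight g k = g := by
  rw [cutLeft, cutRight, FreeGroup.mul_mk, List.take_append_drop, FreeGroup.mk_toWord]

lemma norm_mk_of_isReduced {w : List (α × Bool)} (h : FreeGroup.IsReduced w) :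
    (FreeGroup.mk w).norm = w.length := by
  rw [FreeGroup.norm, FreeGroup.toWord_mk, h.reduce_eq]

lemma cutIndex_le_length (g : FreeGroup α) (k : Fin g.toWord.length) :
    cutIndex g.toWord[k] k ≤ g.toWord.length := by
  unfold cutIndex
  cases g.toWord[k].2
  exacts [k.2, k.2.le]

lemma norm_cutLeft (g : FreeGroup α) (k : Fin g.toWord.length) :
    (cutLeft g k).norm = cutIndex g.toWord[k] k := by
  rw [cutLeft, norm_mk_of_isReduced (FreeGroup.isReduced_toWord.infix
    (List.take_prefix _ _).isInfix), List.length_take_of_le (cutIndex_le_length g k)]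

lemma norm_cutRight (g : FreeGroup α) (k : Fin g.toWord.length) :
    (cutRight g k).norm = g.norm - cutIndex g.toWord[k] k := by
  rw [cutRight, norm_mk_of_isReduced (FreeGroup.isReduced_toWord.infix
    (List.drop_suffix _ _).isInfix), List.length_drop, FreeGroup.norm]

lemma norm_cutLeft_add_norm_cutRight (g : FreeGroup α) (k : Fin g.toWord.length) :
    (cutLeft g k).norm + (cutRight g k).norm = g.norm := by
  rw [norm_cutLeft, norm_cutRight]
  exact Nat.add_sub_cancel' (cutIndex_le_length g k)

lemma cutLeft_eq_one_iff {g : FreeGroup α} {k : Fin g.toWord.length} :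
    cutLeft g k = 1 ↔ (k : ℕ) = 0 ∧ g.toWord[k].2 = true := by
  rw [← FreeGroup.norm_eq_zero, norm_cutLeft, cutIndex]
  cases g.toWord[k].2 <;> simp

lemma cutRight_eq_one_iff {g : FreeGroup α} {k : Fin g.toWord.length} :
    cutRight g k = 1 ↔ (k : ℕ) + 1 = g.toWord.length ∧ g.toWord[k].2 = false := by
  rw [← FreeGroup.norm_eq_zero, norm_cutRight, cutIndex, FreeGroup.norm]
  cases g.toWord[k].2 <;> simp <;> omega

lemma eq_of_cut_eq_one {g : FreeGroup α} (hg : FreeGroup.IsCyclicallyReduced g.toWord)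
    {k k' : Fin g.toWord.length} (hvar : g.toWord[k].1 = g.toWord[k'].1)
    (hk : cutLeft g k = 1 ∨ cutRight g k = 1) (hk' : cutLeft g k' = 1 ∨ cutRight g k' = 1) :
    k = k' := by
  have hmixed {i j : Fin g.toWord.length} (hij : g.toWord[i].1 = g.toWord[j].1)
      (hi : cutLeft g i = 1) (hj : cutRight g j = 1) : False := by
    obtain ⟨hi, hpos⟩ := cutLeft_eq_one_iff.mp hi
    obtain ⟨hj, hneg⟩ := cutRight_eq_one_iff.mp hj
    have hhead : g.toWord[i] ∈ g.toWord.head? := by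
      simp [List.head?_eq_getElem?, ← hi]
    have hlast : g.toWord[j] ∈ g.toWord.getLast? := by
      simp [List.getLast?_eq_getElem?, ← hj]
    exact Bool.false_ne_true (hneg.symm.trans ((hg.2 _ hlast _ hhead hij.symm).trans hpos))
  rcases hk with hk | hk <;> rcases hk' with hk' | hk'
  · exact Fin.ext ((cutLeft_eq_one_iff.mp hk).1.trans (cutLeft_eq_one_iff.mp hk').1.symm)
  · exact (hmixed hvar hk hk').elim
  · exact (hmixed hvar.symm hk' hk).elim
  · exact Fin.ext (Nat.succ_injective
      ((cutRight_eq_one_iff.mp hk).1.trans (cutRight_eq_one_iff.mp hk').1.symm))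

lemma exists_isConj_isCyclicallyReduced (g : FreeGroup α) :
    ∃ h, IsConj g h ∧ h.norm ≤ g.norm ∧ FreeGroup.IsCyclicallyReduced h.toWord := by
  have hred := FreeGroup.reduceCyclically.isCyclicallyReduced (FreeGroup.isReduced_toWord (x := g))
  have hconj := FreeGroup.reduceCyclically.conj_conjugator_reduceCyclically g.toWord
  refine ⟨FreeGroup.mk (FreeGroup.reduceCyclically g.toWord), ?_, ?_, ?_⟩
  · refine (isConj_iff.mpr ⟨FreeGroup.mk (FreeGroup.reduceCyclically.conjugator g.toWord), ?_⟩).symm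
    rw [FreeGroup.inv_mk, FreeGroup.mul_mk, FreeGroup.mul_mk, hconj, FreeGroup.mk_toWord]
  · have hlen := congrArg List.length hconj
    simp only [List.length_append] at hlen
    rw [norm_mk_of_isReduced hred.isReduced, FreeGroup.norm]
    omega
  · rwa [FreeGroup.toWord_mk, hred.isReduced.reduce_eq]

lemma exists_cut_eq_one {w : List (α × Bool)} (hw : FreeGroup.IsReduced w) {e : α}
    (h : w.head? = some (e, true) ∨ w.getLast? = some (e, false)) :
    ∃ k, cutLeft (FreeGroup.mk w) k = 1 ∨ cutRight (FreeGroup.mk w) k = 1 := by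
  have hword : (FreeGroup.mk w).toWord = w := by rw [FreeGroup.toWord_mk, hw.reduce_eq]
  have hpos : 0 < w.length := List.length_pos_iff.mpr (by rintro rfl; simp at h)
  rcases h with h | h
  · refine ⟨⟨0, by rwa [hword]⟩, .inl (cutLeft_eq_one_iff.mpr ⟨rfl, ?_⟩)⟩
    obtain ⟨_, h⟩ := List.getElem?_eq_some_iff.mp (List.head?_eq_getElem? ▸ h)
    simp [hword, h]
  · refine ⟨⟨w.length - 1, by rw [hword]; omega⟩, .inr (cutRight_eq_one_iff.mpr ⟨?_, ?_⟩)⟩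
    · simp only [hword]; omega
    · obtain ⟨_, h⟩ := List.getElem?_eq_some_iff.mp (List.getLast?_eq_getElem? ▸ h)
      simp [hword, h]

/- Rotating a cyclically reduced word so that it starts with a positive letter or ends with an
inverse one makes the cut at that letter trivial. -/
theorem exists_isConj_unique_cut_eq_one {g : FreeGroup α} (hg : g ≠ 1) :
    ∃ (h : FreeGroup α) (k₀ : Fin h.toWord.length), IsConj g h ∧ h.norm ≤ g.norm ∧
      (cutLeft h k₀ = 1 ∨ cutRight h k₀ = 1) ∧
      ∀ k ≠ k₀, h.toWord[k].1 = h.toWord[k₀].1 → cutLeft h k ≠ 1 ∧ cutRight h k ≠ 1 := by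
  suffices hrot : ∃ w e, IsConj g (FreeGroup.mk w) ∧ w.length ≤ g.norm ∧
      FreeGroup.IsCyclicallyReduced w ∧
      (w.head? = some (e, true) ∨ w.getLast? = some (e, false)) by
    obtain ⟨w, e, hconj, hlen, hw, hend⟩ := hrot
    obtain ⟨k₀, hk₀⟩ := exists_cut_eq_one hw.isReduced hend
    refine ⟨FreeGroup.mk w, k₀, hconj, FreeGroup.norm_mk_le.trans hlen, hk₀, fun k hk hvar => ?_⟩
    rw [← hw.isReduced.reduce_eq, ← FreeGroup.toWord_mk] at hw
    exact not_or.mp fun h => hk (eq_of_cut_eq_one hw hvar h hk₀)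
  obtain ⟨h, hconj, hnorm, hred⟩ := exists_isConj_isCyclicallyReduced g
  rw [← FreeGroup.mk_toWord (x := h)] at hconj
  have hlen : h.toWord.length ≤ g.norm := hnorm
  rcases hw : h.toWord with _ | ⟨⟨e, _ | _⟩, w⟩ <;> rw [hw] at hconj hlen hred
  · exact absurd (isConj_one_left.mp hconj) hg
  · refine ⟨w ++ [(e, false)], e, hconj.trans ?_, by simpa using hlen,
      isCyclicallyReduced_append_singleton hred, .inr (by simp)⟩
    rw [← List.singleton_append, ← FreeGroup.mul_mk, ← FreeGroup.mul_mk]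
    exact isConj_iff.mpr ⟨(FreeGroup.mk [(e, false)])⁻¹, by group⟩
  · exact ⟨_, e, hconj, hlen, hred, .inl rfl⟩

end Cuts

section Holonomy

variable {α n : Type*} [Fintype n] [DecidableEq n]

/-- The holonomy of a loop, encoded as an element of the free group on the edges, in a
configuration `V` of unitary matrices. -/
def holonomy (V : α → unitaryGroup n ℂ) : FreeGroup α →* Matrix n n ℂ :=
  (unitaryGroup n ℂ).subtype.comp (FreeGroup.lift V)

lemma continuous_holonomy (g : FreeGroup α) :
    Continuous fun V : α → unitaryGroup n ℂ => holonomy V g :=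
  continuous_subtype_val.comp (continuous_freeGroup_lift g)

lemma holonomy_mk (V : α → unitaryGroup n ℂ) (w : List (α × Bool)) :
    holonomy V (FreeGroup.mk w) = (w.map fun x => holonomy V (FreeGroup.mk [x])).prod := by
  induction w with
  | nil => simp [← FreeGroup.one_eq_mk]
  | cons x w ih => rw [List.map_cons, List.prod_cons, ← ih, ← map_mul, FreeGroup.mul_mk]; rfl

lemma norm_trace_holonomy_le (V : α → unitaryGroup n ℂ) (g : FreeGroup α) :
    ‖(holonomy V g).trace‖ ≤ Fintype.card n :=
  norm_trace_unitary_le _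

lemma trace_holonomy_eq_of_isConj (V : α → unitaryGroup n ℂ) {g h : FreeGroup α}
    (hgh : IsConj g h) : (holonomy V g).trace = (holonomy V h).trace := by
  obtain ⟨x, rfl⟩ := isConj_iff.mp hgh
  rw [map_mul, trace_mul_comm, ← map_mul]
  simp

lemma trace_holonomy_add_trace_holonomy_inv (V : α → unitaryGroup n ℂ) (g : FreeGroup α) :
    (holonomy V g).trace + (holonomy V g⁻¹).trace = 2 * ((holonomy V g).trace.re : ℂ) := by
  have hinv : (holonomy V g⁻¹).trace = star (holonomy V g).trace := by
    simp [holonomy, star_eq_conjTranspose, trace_conjTranspose]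
  rw [hinv, Complex.star_def, Complex.add_conj]
  norm_num

variable [DecidableEq α]

/-- The derivative of `holonomy V g` under left translation of the variable `e` in a given
direction. -/
def holonomyDeriv (e : α) (V : α → unitaryGroup n ℂ) (g : FreeGroup α) :
    Matrix n n ℂ →ₗ[ℂ] Matrix n n ℂ :=
  ∑ k : Fin g.toWord.length, letterSign e g.toWord[k] •
    LinearMap.mulLeftRight ℂ (holonomy V (cutLeft g k), holonomy V (cutRight g k))

lemma holonomyDeriv_apply (e : α) (V : α → unitaryGroup n ℂ) (g : FreeGroup α)
    (X : Matrix n n ℂ) :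
    holonomyDeriv e V g X = ∑ k : Fin g.toWord.length, letterSign e g.toWord[k] •
      (holonomy V (cutLeft g k) * X * holonomy V (cutRight g k)) := by
  simp [holonomyDeriv, LinearMap.mulLeftRight_apply]

lemma continuous_holonomyDeriv (e : α) (g : FreeGroup α) (X : Matrix n n ℂ) :
    Continuous fun V : α → unitaryGroup n ℂ => holonomyDeriv e V g X := by
  simp only [holonomyDeriv_apply]
  exact continuous_finsetSum _ fun k _ =>
    (((continuous_holonomy _).matrix_mul continuous_const).matrix_mul
      (continuous_holonomy _)).fun_const_smul _

section Flow

open scoped Matrix.Norms.L2Operator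

/-- The one-parameter group of configurations generated by the direction `I • X` in the variable
`e`. -/
def unitaryFlow (e : α) (X : selfAdjoint (Matrix n n ℂ)) (t : ℝ) : α → unitaryGroup n ℂ :=
  Pi.mulSingle e (selfAdjoint.expUnitary (t • X))

lemma hasDerivAt_unitaryFlow_mul (e : α) (X : selfAdjoint (Matrix n n ℂ))
    (V : α → unitaryGroup n ℂ) (t : ℝ) :
    HasDerivAt (fun t => ((unitaryFlow e X t * V) e : Matrix n n ℂ))
      (Complex.I • (X : Matrix n n ℂ) * (unitaryFlow e X t * V) e) t := by
  have hflow (t : ℝ) : ((unitaryFlow e X t * V) e : Matrix n n ℂ) =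
      NormedSpace.exp (t • Complex.I • (X : Matrix n n ℂ)) * V e := by
    simp [unitaryFlow, smul_comm Complex.I]
  simp only [hflow, ← mul_assoc]
  exact (hasDerivAt_exp_smul_const' (𝕂 := ℝ) _ t).mul_const _

lemma hasDerivAt_holonomy_letter (e : α) (X : selfAdjoint (Matrix n n ℂ))
    (V : α → unitaryGroup n ℂ) (x : α × Bool) (t : ℝ) :
    HasDerivAt (fun t => holonomy (unitaryFlow e X t * V) (FreeGroup.mk [x]))
      (letterSign e x •
        (holonomy (unitaryFlow e X t * V) (FreeGroup.mk ([x].take (cutIndex x 0))) *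
          Complex.I • (X : Matrix n n ℂ) *
          holonomy (unitaryFlow e X t * V) (FreeGroup.mk ([x].drop (cutIndex x 0))))) t := by
  obtain ⟨a, b⟩ := x
  obtain rfl | hae := eq_or_ne a e
  · have h := hasDerivAt_unitaryFlow_mul a X V t
    cases b
    · convert! h.star using 1
      · simp [holonomy]
      · simp [holonomy, letterSign, cutIndex, ← FreeGroup.one_eq_mk]
    · convert h using 1
      · simp [holonomy]
      · simp [holonomy, letterSign, cutIndex, ← FreeGroup.one_eq_mk]
  · have hconst (t : ℝ) : holonomy (unitaryFlow e X t * V) (FreeGroup.mk [(a, b)]) =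
        holonomy V (FreeGroup.mk [(a, b)]) := by
      simp [holonomy, unitaryFlow, hae]
    simp only [hconst, letterSign, hae, if_false, zero_smul]
    exact hasDerivAt_const t _

lemma hasDerivAt_holonomy (e : α) (X : selfAdjoint (Matrix n n ℂ)) (V : α → unitaryGroup n ℂ)
    (g : FreeGroup α) (t : ℝ) :
    HasDerivAt (fun t => holonomy (unitaryFlow e X t * V) g)
      (holonomyDeriv e (unitaryFlow e X t * V) g (Complex.I • (X : Matrix n n ℂ))) t := by
  have h := hasDerivAt_list_prod (l := g.toWord) fun x _ =>
    hasDerivAt_holonomy_letter e X V x t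
  simp only [← holonomy_mk, FreeGroup.mk_toWord] at h
  refine h.congr_deriv ?_
  rw [holonomyDeriv_apply]
  refine sum_congr rfl fun k _ => ?_
  have htake : g.toWord.take (cutIndex g.toWord[k] k) =
      g.toWord.take k ++ [g.toWord[k]].take (cutIndex g.toWord[k] 0) := by
    unfold cutIndex; cases g.toWord[k].2 <;> simp
  have hdrop : g.toWord.drop (cutIndex g.toWord[k] k) =
      [g.toWord[k]].drop (cutIndex g.toWord[k] 0) ++ g.toWord.drop (k + 1) := by
    unfold cutIndex; cases g.toWord[k].2 <;> simp
  simp only [cutLeft, cutRight, htake, hdrop, ← FreeGroup.mul_mk, map_mul, mul_smul_comm,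
    smul_mul_assoc, mul_assoc]

end Flow

end Holonomy

section LoopEquation

variable {α n : Type*} [Fintype n] [DecidableEq n]

/-- The product of the traces of the holonomies of a family of loops. -/
def traceProd (V : α → unitaryGroup n ℂ) (s : List (FreeGroup α)) : ℂ :=
  (s.map fun g => (holonomy V g).trace).prod

@[simp] lemma traceProd_nil (V : α → unitaryGroup n ℂ) : traceProd V [] = 1 := rfl

@[simp] lemma traceProd_cons (V : α → unitaryGroup n ℂ) (g : FreeGroup α)
    (s : List (FreeGroup α)) : traceProd V (g :: s) = (holonomy V g).trace * traceProd V s := by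
  simp [traceProd]

lemma continuous_traceProd (s : List (FreeGroup α)) :
    Continuous fun V : α → unitaryGroup n ℂ => traceProd V s := by
  induction s with
  | nil => simpa using continuous_const
  | cons g s ih => simpa using (continuous_holonomy g).matrix_trace.fun_mul ih

lemma norm_traceProd_le (V : α → unitaryGroup n ℂ) (s : List (FreeGroup α)) :
    ‖traceProd V s‖ ≤ (Fintype.card n : ℝ) ^ s.length := by
  induction s with
  | nil => simp
  | cons g s ih =>
    rw [traceProd_cons, norm_mul, List.length_cons, pow_succ']
    exact mul_le_mul (norm_trace_holonomy_le V g) ih (norm_nonneg _) (by positivity)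

/-- The expected product of traces of the family of loops `s` in a random configuration. -/
def loopMoment [MeasurableSpace (unitaryGroup n ℂ)] (μ : Measure (α → unitaryGroup n ℂ))
    (s : List (FreeGroup α)) : ℂ :=
  ∫ V, traceProd V s ∂μ

section LoopMoment

variable [MeasurableSpace (unitaryGroup n ℂ)] (μ : Measure (α → unitaryGroup n ℂ))

lemma loopMoment_one_cons (s : List (FreeGroup α)) :
    loopMoment μ (1 :: s) = Fintype.card n * loopMoment μ s := by
  simp [loopMoment, integral_const_mul]

lemma loopMoment_cons_one_cons (g : FreeGroup α) (s : List (FreeGroup α)) :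
    loopMoment μ (g :: 1 :: s) = Fintype.card n * loopMoment μ (g :: s) := by
  simp [loopMoment, ← integral_const_mul, mul_left_comm]

lemma loopMoment_cons_eq_of_isConj {g h : FreeGroup α} (hgh : IsConj g h)
    (s : List (FreeGroup α)) : loopMoment μ (g :: s) = loopMoment μ (h :: s) := by
  simp only [loopMoment, traceProd_cons, trace_holonomy_eq_of_isConj _ hgh]

lemma norm_loopMoment_le [IsProbabilityMeasure μ] (s : List (FreeGroup α)) :
    ‖loopMoment μ s‖ ≤ (Fintype.card n : ℝ) ^ s.length := by
  simpa [loopMoment] using norm_integral_le_of_norm_le_const (μ := μ)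
    (.of_forall fun V => norm_traceProd_le V s)

variable [Countable α] [BorelSpace (unitaryGroup n ℂ)] [IsFiniteMeasure μ]

lemma integrable_traceProd (s : List (FreeGroup α)) : Integrable (traceProd · s) μ :=
  (continuous_traceProd s).integrable_of_hasCompactSupport (.of_compactSpace _)

lemma sum_mul_loopMoment {ι : Type*} [Fintype ι] (c : ι → ℂ) (s : ι → List (FreeGroup α)) :
    ∑ i, c i * loopMoment μ (s i) = ∫ V, ∑ i, c i * traceProd V (s i) ∂μ := by
  rw [integral_finsetSum _ fun i _ => (integrable_traceProd μ (s i)).const_mul (c i)]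
  simp only [integral_const_mul, loopMoment]

end LoopMoment

variable [DecidableEq α]

/-- The derivative of `traceProd V s` under left translation of the variable `e` in a given
direction. -/
def traceProdDeriv (e : α) (V : α → unitaryGroup n ℂ) (s : List (FreeGroup α)) :
    Matrix n n ℂ →ₗ[ℂ] ℂ :=
  ∑ j : Fin s.length, traceProd V (s.eraseIdx j) • (traceLinearMap n ℂ ℂ ∘ₗ holonomyDeriv e V s[j])

lemma traceProdDeriv_apply (e : α) (V : α → unitaryGroup n ℂ) (s : List (FreeGroup α))
    (X : Matrix n n ℂ) :
    traceProdDeriv e V s X =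
      ∑ j : Fin s.length, traceProd V (s.eraseIdx j) * (holonomyDeriv e V s[j] X).trace := by
  simp [traceProdDeriv]

lemma continuous_traceProdDeriv (e : α) (s : List (FreeGroup α)) (X : Matrix n n ℂ) :
    Continuous fun V : α → unitaryGroup n ℂ => traceProdDeriv e V s X := by
  simp only [traceProdDeriv_apply]
  exact continuous_finsetSum _ fun j _ =>
    (continuous_traceProd _).mul (continuous_holonomyDeriv e _ X).matrix_trace

lemma continuous_deriv_holonomy_apply_mul_traceProd (e : α) (g : FreeGroup α)
    (s : List (FreeGroup α)) (i j : n) (X : Matrix n n ℂ) :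
    Continuous fun V : α → unitaryGroup n ℂ => holonomyDeriv e V g X i j * traceProd V s +
      holonomy V g i j * traceProdDeriv e V s X :=
  (((continuous_holonomyDeriv e g X).matrix_elem i j).mul (continuous_traceProd s)).add
    (((continuous_holonomy g).matrix_elem i j).mul (continuous_traceProdDeriv e s X))

lemma hasDerivAt_holonomy_apply (e : α) (X : selfAdjoint (Matrix n n ℂ))
    (V : α → unitaryGroup n ℂ) (g : FreeGroup α) (t : ℝ) (i j : n) :
    HasDerivAt (fun t => holonomy (unitaryFlow e X t * V) g i j)
      (holonomyDeriv e (unitaryFlow e X t * V) g (Complex.I • (X : Matrix n n ℂ)) i j) t :=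
  hasDerivAt_pi.mp (hasDerivAt_pi.mp (hasDerivAt_holonomy e X V g t) i) j

lemma hasDerivAt_traceProd (e : α) (X : selfAdjoint (Matrix n n ℂ)) (V : α → unitaryGroup n ℂ)
    (s : List (FreeGroup α)) (t : ℝ) :
    HasDerivAt (fun t => traceProd (unitaryFlow e X t * V) s)
      (traceProdDeriv e (unitaryFlow e X t * V) s (Complex.I • (X : Matrix n n ℂ))) t := by
  have htrace (g : FreeGroup α) :
      HasDerivAt (fun t => (holonomy (unitaryFlow e X t * V) g).trace)
        (holonomyDeriv e (unitaryFlow e X t * V) g (Complex.I • (X : Matrix n n ℂ))).trace t :=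
    HasDerivAt.fun_sum fun i _ => hasDerivAt_holonomy_apply e X V g t i i
  refine (hasDerivAt_list_prod fun g _ => htrace g).congr_deriv ?_
  rw [traceProdDeriv_apply]
  refine sum_congr rfl fun j _ => ?_
  simp only [traceProd, List.eraseIdx_eq_take_drop_succ, List.map_append, List.prod_append]
  ring

lemma sum_mul_single_mul_apply (P S : Matrix n n ℂ) :
    ∑ i, ∑ j, (P * single i j (1 : ℂ) * S : Matrix n n ℂ) i j = P.trace * S.trace := by
  simp [trace, sum_mul_sum, mul_apply, single_apply, ite_and]

lemma sum_apply_mul_trace_single (M P S : Matrix n n ℂ) :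
    ∑ i, ∑ j, M i j * (P * single i j (1 : ℂ) * S : Matrix n n ℂ).trace =
      (M * S * P).trace := by
  have htrace (i j : n) : (P * single i j (1 : ℂ) * S : Matrix n n ℂ).trace = (S * P) j i := by
    rw [trace_mul_comm, ← mul_assoc, trace_mul_single]
    simp
  simp_rw [htrace, mul_assoc]
  simp [trace, mul_apply]

lemma sum_holonomyDeriv_single_apply (e : α) (V : α → unitaryGroup n ℂ) (g : FreeGroup α) :
    ∑ i, ∑ j, holonomyDeriv e V g (single i j 1) i j =
      ∑ k : Fin g.toWord.length, letterSign e g.toWord[k] *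
        ((holonomy V (cutLeft g k)).trace * (holonomy V (cutRight g k)).trace) := by
  simp only [holonomyDeriv_apply, Matrix.sum_apply, Matrix.smul_apply, smul_eq_mul,
    ← sum_mul_single_mul_apply, mul_sum]
  rw [sum_congr rfl fun i _ => sum_comm, sum_comm]

lemma sum_apply_mul_trace_holonomyDeriv_single (e : α) (V : α → unitaryGroup n ℂ)
    (M : Matrix n n ℂ) (g : FreeGroup α) :
    ∑ i, ∑ j, M i j * (holonomyDeriv e V g (single i j 1)).trace =
      ∑ k : Fin g.toWord.length, letterSign e g.toWord[k] *
        (M * holonomy V (cutRight g k) * holonomy V (cutLeft g k)).trace := by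
  simp only [holonomyDeriv_apply, trace_sum, trace_smul, smul_eq_mul, mul_sum]
  rw [sum_congr rfl fun i _ => sum_comm, sum_comm]
  simp only [mul_left_comm (M _ _), ← mul_sum, sum_apply_mul_trace_single]

lemma sum_apply_mul_traceProdDeriv_single (e : α) (V : α → unitaryGroup n ℂ)
    (g : FreeGroup α) (s : List (FreeGroup α)) :
    ∑ i, ∑ j, holonomy V g i j * traceProdDeriv e V s (single i j 1) =
      ∑ p : (j : Fin s.length) × Fin s[j].toWord.length, letterSign e s[p.1].toWord[p.2] *
        traceProd V (g * cutRight s[p.1] p.2 * cutLeft s[p.1] p.2 :: s.eraseIdx p.1) := by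
  simp only [traceProdDeriv_apply, mul_sum, mul_left_comm]
  rw [sum_congr rfl fun i _ => sum_comm, sum_comm, Fintype.sum_sigma]
  refine sum_congr rfl fun j _ => ?_
  simp only [← mul_sum, sum_apply_mul_trace_holonomyDeriv_single, traceProd_cons, map_mul]
  simp only [mul_sum]
  exact sum_congr rfl fun k _ => by ring

variable [Countable α] [MeasurableSpace (unitaryGroup n ℂ)] [BorelSpace (unitaryGroup n ℂ)]
  (μ : Measure (α → unitaryGroup n ℂ)) [IsFiniteMeasure μ] [μ.IsMulLeftInvariant]

lemma integral_deriv_holonomy_apply_mul_traceProd_eq_zero (e : α) (g : FreeGroup α)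
    (s : List (FreeGroup α)) (i j : n) (X : Matrix n n ℂ) :
    ∫ V, (holonomyDeriv e V g X i j * traceProd V s +
      holonomy V g i j * traceProdDeriv e V s X) ∂μ = 0 := by
  let F (V : α → unitaryGroup n ℂ) : Matrix n n ℂ →ₗ[ℂ] ℂ :=
    traceProd V s • (entryLinearMap ℂ ℂ i j ∘ₗ holonomyDeriv e V g) +
      holonomy V g i j • traceProdDeriv e V s
  have hF (V : α → unitaryGroup n ℂ) (X : Matrix n n ℂ) : F V X =
      holonomyDeriv e V g X i j * traceProd V s + holonomy V g i j * traceProdDeriv e V s X := by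
    simp [F, mul_comm]
  have hcont (X : Matrix n n ℂ) : Continuous (F · X) := by
    simpa only [hF] using continuous_deriv_holonomy_apply_mul_traceProd e g s i j X
  have hself (X : selfAdjoint (Matrix n n ℂ)) : ∫ V, F V (X : Matrix n n ℂ) ∂μ = 0 := by
    have h : ∫ V, F V (Complex.I • (X : Matrix n n ℂ)) ∂μ = 0 :=
      integral_deriv_mul_left_eq_zero μ (unitaryFlow e X)
        (((continuous_holonomy g).matrix_elem i j).mul (continuous_traceProd s)) (hcont _)
        fun V t => ((hasDerivAt_holonomy_apply e X V g t i j).mul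
          (hasDerivAt_traceProd e X V s t)).congr_deriv (hF _ _).symm
    simpa [integral_const_mul] using h
  simpa only [hF] using integral_linearMap_eq_zero_of_selfAdjoint
    (fun X => (hcont X).integrable_of_hasCompactSupport (.of_compactSpace _)) hself X

theorem loop_equation (e : α) (g : FreeGroup α) (s : List (FreeGroup α)) :
    ∑ k : Fin g.toWord.length, letterSign e g.toWord[k] *
        loopMoment μ (cutLeft g k :: cutRight g k :: s) +
      ∑ p : (j : Fin s.length) × Fin s[j].toWord.length, letterSign e s[p.1].toWord[p.2] *
        loopMoment μ (g * cutRight s[p.1] p.2 * cutLeft s[p.1] p.2 :: s.eraseIdx p.1) = 0 := by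
  have hint (i j : n) : Integrable (fun V : α → unitaryGroup n ℂ =>
      holonomyDeriv e V g (single i j 1) i j * traceProd V s +
        holonomy V g i j * traceProdDeriv e V s (single i j 1)) μ :=
    (continuous_deriv_holonomy_apply_mul_traceProd e g s i j _).integrable_of_hasCompactSupport
      (.of_compactSpace _)
  calc _ = ∫ V, (∑ k : Fin g.toWord.length, letterSign e g.toWord[k] *
            traceProd V (cutLeft g k :: cutRight g k :: s) +
          ∑ p : (j : Fin s.length) × Fin s[j].toWord.length, letterSign e s[p.1].toWord[p.2] *
            traceProd V (g * cutRight s[p.1] p.2 * cutLeft s[p.1] p.2 :: s.eraseIdx p.1)) ∂μ := by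
        rw [sum_mul_loopMoment, sum_mul_loopMoment, integral_add] <;>
          exact integrable_finsetSum _ fun _ _ => (integrable_traceProd μ _).const_mul _
    _ = ∫ V, ∑ i, ∑ j, (holonomyDeriv e V g (single i j 1) i j * traceProd V s +
          holonomy V g i j * traceProdDeriv e V s (single i j 1)) ∂μ := by
        simp only [sum_add_distrib, ← sum_mul, sum_holonomyDeriv_single_apply,
          sum_apply_mul_traceProdDeriv_single]
        simp only [traceProd_cons, sum_mul, mul_assoc]
    _ = ∑ i, ∑ j, ∫ V, (holonomyDeriv e V g (single i j 1) i j * traceProd V s +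
          holonomy V g i j * traceProdDeriv e V s (single i j 1)) ∂μ := by
        rw [integral_finsetSum _ fun i _ => integrable_finsetSum _ fun j _ => hint i j]
        exact sum_congr rfl fun i _ => integral_finsetSum _ fun j _ => hint i j
    _ = 0 := by simp only [integral_deriv_holonomy_apply_mul_traceProd_eq_zero, sum_const_zero]

end LoopEquation

section LoopFamilies

variable {α : Type*} [DecidableEq α]

/-- The families of nontrivial loops of total length at most `m`, on which the estimates of
`loopMoment` proceed by induction. -/
def loopFamilies (α : Type*) [DecidableEq α] (m : ℕ) : Set (List (FreeGroup α)) :=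
  {s | (∀ g ∈ s, g ≠ 1) ∧ (s.map FreeGroup.norm).sum ≤ m}

variable {m : ℕ} {g : FreeGroup α} {s : List (FreeGroup α)}

lemma nil_mem_loopFamilies : [] ∈ loopFamilies α m := by simp [loopFamilies]

lemma cons_mem_loopFamilies : g :: s ∈ loopFamilies α m ↔
    g ≠ 1 ∧ (∀ x ∈ s, x ≠ 1) ∧ g.norm + (s.map FreeGroup.norm).sum ≤ m := by
  simp [loopFamilies, and_assoc]

lemma length_le_of_mem_loopFamilies (hs : s ∈ loopFamilies α m) : s.length ≤ m := by
  have hone : ∀ i ∈ s.map FreeGroup.norm, 1 ≤ i := by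
    simpa [Nat.one_le_iff_ne_zero] using hs.1
  simpa using (List.length_le_sum_of_one_le _ hone).trans hs.2

lemma norm_add_sum_norm_eraseIdx (s : List (FreeGroup α)) (j : Fin s.length) :
    s[j].norm + ((s.eraseIdx j).map FreeGroup.norm).sum = (s.map FreeGroup.norm).sum := by
  simpa [List.eraseIdx_map] using List.add_sum_eraseIdx (l := s.map FreeGroup.norm) (i := j)
    (by simp) fun _ _ => AddCommute.all _ _

lemma eraseIdx_mem_loopFamilies (hs : g :: s ∈ loopFamilies α (m + 1)) (j : Fin s.length) :
    s.eraseIdx j ∈ loopFamilies α m := by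
  obtain ⟨hg, hne, hsum⟩ := cons_mem_loopFamilies.mp hs
  have hnorm : g.norm ≠ 0 := FreeGroup.norm_eq_zero.not.mpr hg
  have herase := norm_add_sum_norm_eraseIdx s j
  exact ⟨fun x hx => hne x (List.mem_of_mem_eraseIdx hx), by omega⟩

lemma split_mem_loopFamilies (hs : g :: s ∈ loopFamilies α m) {k : Fin g.toWord.length}
    (hleft : cutLeft g k ≠ 1) (hright : cutRight g k ≠ 1) :
    cutLeft g k :: cutRight g k :: s ∈ loopFamilies α m := by
  obtain ⟨-, hne, hsum⟩ := cons_mem_loopFamilies.mp hs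
  have hcut := norm_cutLeft_add_norm_cutRight g k
  refine cons_mem_loopFamilies.mpr ⟨hleft, List.forall_mem_cons.mpr ⟨hright, hne⟩, ?_⟩
  simp only [List.map_cons, List.sum_cons]
  omega

lemma merge_mem_loopFamilies (hs : g :: s ∈ loopFamilies α m) {j : Fin s.length}
    {k : Fin s[j].toWord.length} (hmerge : g * cutRight s[j] k * cutLeft s[j] k ≠ 1) :
    g * cutRight s[j] k * cutLeft s[j] k :: s.eraseIdx j ∈ loopFamilies α m := by
  obtain ⟨-, hne, hsum⟩ := cons_mem_loopFamilies.mp hs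
  have hcut := norm_cutLeft_add_norm_cutRight s[j] k
  have herase := norm_add_sum_norm_eraseIdx s j
  have hmul := FreeGroup.norm_mul_le (g * cutRight s[j] k) (cutLeft s[j] k)
  have hmul' := FreeGroup.norm_mul_le g (cutRight s[j] k)
  exact cons_mem_loopFamilies.mpr
    ⟨hmerge, fun x hx => hne x (List.mem_of_mem_eraseIdx hx), by omega⟩

lemma card_sigma_fin_length_toWord (s : List (FreeGroup α)) :
    Fintype.card ((j : Fin s.length) × Fin s[j].toWord.length) =
      (s.map FreeGroup.norm).sum := by
  rw [Fintype.card_sigma, ← Fin.sum_univ_fun_getElem]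
  simp only [Fintype.card_fin, FreeGroup.norm]
  rfl

end LoopFamilies

section Estimates

variable {α n : Type*} [DecidableEq α] [Fintype n] [DecidableEq n]
  [MeasurableSpace (unitaryGroup n ℂ)] (μ : Measure (α → unitaryGroup n ℂ))

lemma norm_loopMoment_split_of_eq_one {g : FreeGroup α} (s : List (FreeGroup α))
    {k : Fin g.toWord.length} (hk : cutLeft g k = 1 ∨ cutRight g k = 1) :
    ‖loopMoment μ (cutLeft g k :: cutRight g k :: s)‖ =
      Fintype.card n * ‖loopMoment μ (g :: s)‖ := by
  rcases hk with hk | hk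
  · have hright : cutRight g k = g := by simpa [hk] using cutLeft_mul_cutRight g k
    rw [hk, loopMoment_one_cons, hright, norm_mul, Complex.norm_natCast]
  · have hleft : cutLeft g k = g := by simpa [hk] using cutLeft_mul_cutRight g k
    rw [hk, loopMoment_cons_one_cons, hleft, norm_mul, Complex.norm_natCast]

variable [Countable α] [BorelSpace (unitaryGroup n ℂ)] [μ.IsMulLeftInvariant]

theorem card_mul_norm_loopMoment_cons_le [IsFiniteMeasure μ] {m : ℕ} {K : ℝ} {g : FreeGroup α}
    {s : List (FreeGroup α)} (hs : g :: s ∈ loopFamilies α m)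
    (hK : ∀ s' ∈ loopFamilies α m, ‖loopMoment μ s'‖ ≤ K)
    (herase : ∀ j : Fin s.length, Fintype.card n * ‖loopMoment μ (s.eraseIdx j)‖ ≤ K) :
    Fintype.card n * ‖loopMoment μ (g :: s)‖ ≤ m * K := by
  have hK0 : 0 ≤ K := (norm_nonneg _).trans (hK [] nil_mem_loopFamilies)
  obtain ⟨hg, hne, hsum⟩ := cons_mem_loopFamilies.mp hs
  obtain ⟨h, k₀, hconj, hnorm, hk₀, hk⟩ := exists_isConj_unique_cut_eq_one hg
  have hh : h ≠ 1 := fun hh => hg (isConj_one_left.mp (hh ▸ hconj))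
  have hhs : h :: s ∈ loopFamilies α m :=
    cons_mem_loopFamilies.mpr ⟨hh, hne, by omega⟩
  have hsplit : ∀ k ≠ k₀, ‖letterSign h.toWord[k₀].1 h.toWord[k] *
      loopMoment μ (cutLeft h k :: cutRight h k :: s)‖ ≤ K := by
    intro k hkk₀
    by_cases hvar : h.toWord[k].1 = h.toWord[k₀].1
    · obtain ⟨hleft, hright⟩ := hk k hkk₀ hvar
      exact norm_letterSign_mul_le _ _ (hK _ (split_mem_loopFamilies hhs hleft hright))
    · simpa only [letterSign, hvar, if_false, zero_mul, norm_zero] using hK0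
  have hmerge (p : (j : Fin s.length) × Fin s[j].toWord.length) :
      ‖letterSign h.toWord[k₀].1 s[p.1].toWord[p.2] * loopMoment μ
        (h * cutRight s[p.1] p.2 * cutLeft s[p.1] p.2 :: s.eraseIdx p.1)‖ ≤ K := by
    refine norm_letterSign_mul_le _ _ ?_
    by_cases hone : h * cutRight s[p.1] p.2 * cutLeft s[p.1] p.2 = 1
    · rw [hone, loopMoment_one_cons, norm_mul, Complex.norm_natCast]
      exact herase p.1
    · exact hK _ (merge_mem_loopFamilies hhs hone)
  calc (Fintype.card n : ℝ) * ‖loopMoment μ (g :: s)‖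
      = ‖letterSign h.toWord[k₀].1 h.toWord[k₀] *
          loopMoment μ (cutLeft h k₀ :: cutRight h k₀ :: s)‖ := by
        rw [norm_mul, norm_letterSign_self, one_mul, norm_loopMoment_split_of_eq_one μ s hk₀,
          loopMoment_cons_eq_of_isConj μ hconj]
    _ ≤ _ := norm_le_card_mul_of_sum_add_sum_eq_zero (loop_equation μ h.toWord[k₀].1 h s) hK0 k₀
        hsplit hmerge
    _ ≤ m * K := by
        rw [card_sigma_fin_length_toWord, Fintype.card_fin, ← FreeGroup.norm]
        gcongr
        exact_mod_cast (by omega : h.norm + (s.map FreeGroup.norm).sum ≤ m)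

/-- The constant that bounds the moments of the families in `loopFamilies α m`; the recursion
comes from `loopMoment μ` being at most `B / 2 + m * C + 1` at level `m` when it is at most `B`
there and at most `C` one level below. -/
def loopMomentBound : ℕ → ℕ
  | 0 => 1
  | m + 1 => 2 * ((m + 1) * loopMomentBound m + 1)

lemma loopMomentBound_pos (m : ℕ) : 0 < loopMomentBound m := by
  cases m <;> simp [loopMomentBound]

variable [IsProbabilityMeasure μ]

theorem norm_loopMoment_le_loopMomentBound {m : ℕ} (hm : 2 * m ≤ Fintype.card n)
    {s : List (FreeGroup α)} (hs : s ∈ loopFamilies α m) :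
    ‖loopMoment μ s‖ ≤ loopMomentBound m := by
  induction m generalizing s with
  | zero =>
    obtain rfl := List.length_eq_zero_iff.mp (Nat.le_zero.mp (length_le_of_mem_loopFamilies hs))
    simpa [loopMomentBound] using norm_loopMoment_le μ []
  | succ m ih =>
    have hm' : 2 * ((m : ℝ) + 1) ≤ Fintype.card n := by exact_mod_cast hm
    have hcard : 0 < (Fintype.card n : ℝ) := by linarith [m.cast_nonneg (α := ℝ)]
    have hbdd : BddAbove ((‖loopMoment μ ·‖) '' loopFamilies α (m + 1)) := by
      refine ⟨(Fintype.card n : ℝ) ^ (m + 1), Set.forall_mem_image.mpr fun s hs => ?_⟩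
      exact (norm_loopMoment_le μ s).trans
        (pow_le_pow_right₀ (by linarith) (length_le_of_mem_loopFamilies hs))
    push_cast [loopMomentBound]
    refine le_two_mul_of_bddAbove_of_forall_le_half_add hbdd (fun B hB s hs => ?_) hs
    have hB0 : 0 ≤ B := (norm_nonneg _).trans (hB [] nil_mem_loopFamilies)
    cases s with
    | nil =>
      have hnil : ‖loopMoment μ []‖ ≤ 1 := by simpa using norm_loopMoment_le μ []
      have hb0 : 0 ≤ ((m : ℝ) + 1) * loopMomentBound m := by positivity
      linarith
    | cons g s =>
      have hb0 : 0 ≤ Fintype.card n * (loopMomentBound m : ℝ) := by positivity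
      have hrec := card_mul_norm_loopMoment_cons_le μ (K := B + Fintype.card n * loopMomentBound m)
        hs (fun s' hs' => (hB s' hs').trans (by linarith)) fun j => by
          have := mul_le_mul_of_nonneg_left (ih (by omega) (eraseIdx_mem_loopFamilies hs j))
            hcard.le
          linarith
      push_cast at hrec
      rw [← mul_le_mul_iff_right₀ hcard]
      nlinarith [mul_le_mul_of_nonneg_right hm' hB0]

theorem card_mul_norm_loopMoment_le_of_odd {m : ℕ} (hm : 2 * m ≤ Fintype.card n)
    {s : List (FreeGroup α)} (hs : s ∈ loopFamilies α m) (hodd : Odd s.length) :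
    Fintype.card n * ‖loopMoment μ s‖ ≤ m * loopMomentBound m := by
  induction m generalizing s with
  | zero =>
    obtain rfl := List.length_eq_zero_iff.mp (Nat.le_zero.mp (length_le_of_mem_loopFamilies hs))
    simp at hodd
  | succ m ih =>
    obtain _ | ⟨g, s⟩ := s
    · simp at hodd
    refine card_mul_norm_loopMoment_cons_le μ hs
      (fun s' hs' => norm_loopMoment_le_loopMomentBound μ hm hs') fun j => ?_
    have hodd' : Odd (s.eraseIdx j).length := by
      have hj := j.2
      rw [List.length_cons, Nat.odd_iff] at hodd
      rw [List.length_eraseIdx_of_lt hj, Nat.odd_iff]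
      omega
    refine (ih (by omega) (eraseIdx_mem_loopFamilies hs j) hodd').trans ?_
    exact_mod_cast (by rw [loopMomentBound]; nlinarith)

theorem card_mul_norm_integral_pow_sum_trace_le {I : Type*} [Fintype I] {p : I → FreeGroup α}
    (hp : ∀ i, p i ≠ 1) {q : ℕ} (hq : ∀ i, (p i).norm ≤ q) {l : ℕ} (hl : Odd l)
    (hcard : 2 * (l * q) ≤ Fintype.card n) :
    Fintype.card n * ‖∫ V, (∑ i, (holonomy V (p i)).trace) ^ l ∂μ‖ ≤
      Fintype.card I ^ l * (↑(l * q) * loopMomentBound (l * q)) := by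
  have hmem (f : Fin l → I) : List.ofFn (p ∘ f) ∈ loopFamilies α (l * q) := by
    refine ⟨List.forall_mem_ofFn_iff.mpr fun k => hp (f k), ?_⟩
    rw [List.map_ofFn, List.sum_ofFn]
    simpa using Finset.sum_le_card_nsmul univ (fun k => (p (f k)).norm) q fun k _ => hq (f k)
  have hexpand : ∫ V, (∑ i, (holonomy V (p i)).trace) ^ l ∂μ =
      ∑ f : Fin l → I, loopMoment μ (List.ofFn (p ∘ f)) := by
    simp only [loopMoment]
    rw [← integral_finsetSum _ fun f _ => integrable_traceProd μ _]
    simp [Fintype.sum_pow, traceProd, List.map_ofFn, List.prod_ofFn]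
  calc Fintype.card n * ‖∫ V, (∑ i, (holonomy V (p i)).trace) ^ l ∂μ‖
      ≤ ∑ f : Fin l → I, Fintype.card n * ‖loopMoment μ (List.ofFn (p ∘ f))‖ := by
        rw [hexpand, ← mul_sum]
        gcongr
        exact norm_sum_le _ _
    _ ≤ ∑ _f : Fin l → I, (↑(l * q) * loopMomentBound (l * q) : ℝ) :=
        sum_le_sum fun f _ => card_mul_norm_loopMoment_le_of_odd μ hcard (hmem f) (by simpa)
    _ = Fintype.card I ^ l * (↑(l * q) * loopMomentBound (l * q)) := by simp

end Estimates

section Wilson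

variable {D L : ℕ}

/-- The boundary of the plaquette at `x` in the directions `p`, as a loop in the free group on the
edges; the product order is that of the matrices in `wilsonAction`. -/
def plaquette (x : Site D L) (p : Fin D × Fin D) : FreeGroup (Edge D L) :=
  FreeGroup.mk
    [((x, p.2), false), ((shift x p.2, p.1), false), ((shift x p.1, p.2), true), ((x, p.1), true)]

/-- The index type of the plaquettes of the lattice, each with two orientations. -/
abbrev OrientedPlaquette (D L : ℕ) := Site D L × {p : Fin D × Fin D // p.1 < p.2} × Bool

/-- The boundary loop of an oriented plaquette; the orientation `false` reverses `plaquette`. -/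
def OrientedPlaquette.boundary (i : OrientedPlaquette D L) : FreeGroup (Edge D L) :=
  if i.2.2 then plaquette i.1 i.2.1 else (plaquette i.1 i.2.1)⁻¹

lemma norm_plaquette (x : Site D L) {p : Fin D × Fin D} (hp : p.1 < p.2) :
    (plaquette x p).norm = 4 :=
  norm_mk_of_isReduced (by simp [FreeGroup.IsReduced, hp.ne, hp.ne'])

lemma OrientedPlaquette.norm_boundary (i : OrientedPlaquette D L) : i.boundary.norm = 4 := by
  unfold boundary
  split
  · exact norm_plaquette _ i.2.1.2
  · rw [FreeGroup.norm_inv_eq, norm_plaquette _ i.2.1.2]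

lemma OrientedPlaquette.boundary_ne_one (i : OrientedPlaquette D L) : i.boundary ≠ 1 := by
  rw [ne_eq, ← FreeGroup.norm_eq_zero, norm_boundary]
  decide

lemma card_orientedPlaquette_le [NeZero L] :
    Fintype.card (OrientedPlaquette D L) ≤ 2 * L ^ D * D ^ 2 := by
  have hpairs : Fintype.card {p : Fin D × Fin D // p.1 < p.2} ≤ D ^ 2 := by
    simpa [sq] using Fintype.card_subtype_le fun p : Fin D × Fin D => p.1 < p.2
  calc Fintype.card (OrientedPlaquette D L)
      = L ^ D * (Fintype.card {p : Fin D × Fin D // p.1 < p.2} * 2) := by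
        simp only [Fintype.card_prod, Fintype.card_pi_const, ZMod.card, Fintype.card_bool]
    _ ≤ L ^ D * (D ^ 2 * 2) := by gcongr
    _ = 2 * L ^ D * D ^ 2 := by ring

variable {N : ℕ}

lemma holonomy_plaquette (U : Conf D L N) (x : Site D L) (p : Fin D × Fin D) :
    holonomy U (plaquette x p) = (U (x, p.2) : Matrix (Fin N) (Fin N) ℂ)ᴴ
      * (U (shift x p.2, p.1) : Matrix (Fin N) (Fin N) ℂ)ᴴ
      * (U (shift x p.1, p.2) : Matrix (Fin N) (Fin N) ℂ)
      * (U (x, p.1) : Matrix (Fin N) (Fin N) ℂ) := by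
  simp [plaquette, holonomy, mul_assoc, star_eq_conjTranspose]

variable [NeZero L]

lemma ofReal_wilsonAction (U : Conf D L N) :
    (wilsonAction D L N U : ℂ) = (2 * (L : ℂ) ^ D)⁻¹ * (N : ℂ)⁻¹ *
      ∑ i : OrientedPlaquette D L, (holonomy U i.boundary).trace := by
  have hpair (x : Site D L) (p : {p : Fin D × Fin D // p.1 < p.2}) :
      ∑ b, (holonomy U (OrientedPlaquette.boundary (x, p, b))).trace =
        2 * ((holonomy U (plaquette x p)).trace.re : ℂ) := by
    simp [OrientedPlaquette.boundary, trace_holonomy_add_trace_holonomy_inv]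
  have hdirs (x : Site D L) :
      ∑ p : Fin D × Fin D with p.1 < p.2, (holonomy U (plaquette x p)).trace.re =
        ∑ p : {p : Fin D × Fin D // p.1 < p.2}, (holonomy U (plaquette x p)).trace.re :=
    sum_subtype _ (by simp) _
  simp_rw [wilsonAction, ← holonomy_plaquette, Fintype.sum_prod_type, hpair, ← mul_sum, hdirs]
  push_cast
  field_simp

lemma continuous_wilsonAction : Continuous (wilsonAction D L N) := by
  unfold wilsonAction
  simp only [← holonomy_plaquette]
  exact continuous_const.mul (continuous_finsetSum _ fun x _ => continuous_finsetSum _ fun p _ =>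
    continuous_const.mul (Complex.continuous_re.comp (continuous_holonomy _).matrix_trace))

variable (μ : Measure (Conf D L N))

lemma ofReal_integral_pow_map_wilsonAction (l : ℕ) :
    ((∫ t, t ^ l ∂μ.map (wilsonAction D L N) : ℝ) : ℂ) =
      ((2 * (L : ℂ) ^ D)⁻¹ * (N : ℂ)⁻¹) ^ l *
        ∫ U, (∑ i : OrientedPlaquette D L, (holonomy U i.boundary).trace) ^ l ∂μ := by
  rw [integral_map continuous_wilsonAction.aemeasurable (by fun_prop),
    ← integral_complex_ofReal, ← integral_const_mul]
  simp_rw [Complex.ofReal_pow, ofReal_wilsonAction, mul_pow]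

theorem abs_integral_pow_map_wilsonAction_le [IsProbabilityMeasure μ] [μ.IsMulLeftInvariant]
    {l : ℕ} (hl : Odd l) (hN : 8 * l ≤ N) :
    |∫ t, t ^ l ∂μ.map (wilsonAction D L N)| ≤
      ((D : ℝ) ^ 2) ^ l * (↑(l * 4) * loopMomentBound (l * 4)) / (N : ℝ) ^ (l + 1) := by
  have hN0 : (0 : ℝ) < N := by exact_mod_cast (by have := hl.pos; omega : 0 < N)
  have hL0 : (0 : ℝ) < L := by exact_mod_cast NeZero.pos L
  have hloops := card_mul_norm_integral_pow_sum_trace_le (n := Fin N) μ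
    OrientedPlaquette.boundary_ne_one (fun i : OrientedPlaquette D L => i.norm_boundary.le) hl
    (by rw [Fintype.card_fin]; omega)
  rw [Fintype.card_fin, ← le_div_iff₀' hN0] at hloops
  have hcard : (Fintype.card (OrientedPlaquette D L) : ℝ) ≤ 2 * (L : ℝ) ^ D * (D : ℝ) ^ 2 := by
    exact_mod_cast card_orientedPlaquette_le
  calc |∫ t, t ^ l ∂μ.map (wilsonAction D L N)|
      = ((2 * (L : ℝ) ^ D)⁻¹ * (N : ℝ)⁻¹) ^ l *
          ‖∫ U, (∑ i : OrientedPlaquette D L, (holonomy U i.boundary).trace) ^ l ∂μ‖ := by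
        rw [← Real.norm_eq_abs, ← Complex.norm_real, ofReal_integral_pow_map_wilsonAction]
        simp
    _ ≤ ((2 * (L : ℝ) ^ D)⁻¹ * (N : ℝ)⁻¹) ^ l *
          ((2 * (L : ℝ) ^ D * (D : ℝ) ^ 2) ^ l * (↑(l * 4) * loopMomentBound (l * 4)) / N) := by
        refine mul_le_mul_of_nonneg_left (hloops.trans ?_) (by positivity)
        gcongr
    _ = ((D : ℝ) ^ 2) ^ l * (↑(l * 4) * loopMomentBound (l * 4)) / (N : ℝ) ^ (l + 1) := by
        simp only [mul_pow, inv_pow]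
        field_simp
        ring

end Wilson

/-- **Odd moments of the pushforward of Haar measure by the Wilson action.**
For every fixed odd `l ≥ 1`, the `l`-th moment of `ρ_N` is `O(1/N^(l+1))` as `N → ∞`;
in particular `N^l ∫ t^l dρ_N → 0`. -/
theorem wilson_odd_moment_vanishes
    (D L : ℕ) [NeZero L] (hD : 2 ≤ D) (hL : 1 ≤ L)
    (haarU : ∀ N : ℕ, Measure (Matrix.unitaryGroup (Fin N) ℂ))
    [∀ N, (haarU N).IsHaarMeasure] [∀ N, IsProbabilityMeasure (haarU N)]
    (l : ℕ) (hl : 1 ≤ l) (hlodd : Odd l) :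
    (∃ C > (0 : ℝ), ∃ N₀ : ℕ, ∀ N ≥ N₀,
        |∫ t, t ^ l ∂((confMeasure D L N (haarU N)).map (wilsonAction D L N))| ≤
          C / (N : ℝ) ^ (l + 1)) ∧
      Tendsto
        (fun N : ℕ => (N : ℝ) ^ l *
          ∫ t, t ^ l ∂((confMeasure D L N (haarU N)).map (wilsonAction D L N)))
        atTop (nhds 0) := by
  have hbound : ∀ N ≥ 8 * l,
      |∫ t, t ^ l ∂((confMeasure D L N (haarU N)).map (wilsonAction D L N))| ≤
        ((D : ℝ) ^ 2) ^ l * (↑(l * 4) * loopMomentBound (l * 4)) / (N : ℝ) ^ (l + 1) := by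
    intro N hN
    have : IsProbabilityMeasure (confMeasure D L N (haarU N)) :=
      inferInstanceAs (IsProbabilityMeasure (Measure.pi fun _ => haarU N))
    have : (confMeasure D L N (haarU N)).IsMulLeftInvariant :=
      inferInstanceAs (Measure.pi fun _ => haarU N).IsMulLeftInvariant
    exact abs_integral_pow_map_wilsonAction_le _ hlodd hN
  have hpos : 0 < ((D : ℝ) ^ 2) ^ l * (↑(l * 4) * loopMomentBound (l * 4)) := by
    have : 0 < D := by omega
    have := loopMomentBound_pos (l * 4)
    positivity
  exact ⟨⟨_, hpos, 8 * l, hbound⟩, tendsto_pow_mul_of_abs_le_div_pow_succ hbound⟩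

end
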